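/- Let g₁,…,g_J (J ≥ 1) be real-valued functions on an interval 𝐈 of ℝ and k a positive integer. If every element t of the density model S̄₀ is of the form t = Σ_{I∈𝒥(t)} exp(Σ_{j=1}^J θ_{I,j}gⱼ)·1_I, where 𝒥(t) is a partition of 𝐈 into at most k intervals (possibly depending on t) and θ_{I,j}∈ℝ, then the class ℱ = {ψ(√(t′/t)) : t,t′∈S̄₀} is weak VC-major with dimension at most ⌈9.4k(J+2)⌉ (the smallest integer ≥ 9.4k(J+2)). -/

import Mathlib

open MeasureTheory Real Set
open scoped Classical ENNReal

noncomputable section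

/-- `ψ(√(b/a))` where `ψ(x)=(x−1)/(x+1)`, `ψ(+∞)=1`, with the conventions
`a/0 = +∞` for `a>0` and `0/0 = 1`. -/
def psiR (a b : ℝ) : ℝ :=
  if a = 0 then (if b = 0 then 0 else 1)
  else (Real.sqrt (b / a) - 1) / (Real.sqrt (b / a) + 1)

/-- The class of sets `C` on `𝒴` is VC with dimension at most `d`. -/
def VCdimLE {𝒴 : Type*} (C : Set (Set 𝒴)) (d : ℕ) : Prop :=
  ∀ F : Finset 𝒴,
    (∀ A : Finset 𝒴, A ⊆ F → ∃ c ∈ C, ∀ y ∈ F, y ∈ c ↔ y ∈ A) → F.card ≤ d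

/-- A class `ℱ` of real-valued functions on `𝒴` is weak VC-major with dimension at
most `d`. -/
def WeakVCMajorLE {𝒴 : Type*} (ℱ : Set (𝒴 → ℝ)) (d : ℕ) : Prop :=
  ∀ u : ℝ, VCdimLE {B | ∃ f ∈ ℱ, B = {y | u < f y}} d

lemma aux_bad {N s m : ℕ} (p : Fin N → Fin (s + 1) → ℝ)
    (hlt : ∀ a b, a < b → ∀ r r', p a r < p b r')
    (hmin : ∀ a r, p a 0 ≤ p a r)
    (Jp : Fin m → Set ℝ) (hc : ∀ i, (Jp i).OrdConnected) (hcov : ∀ a r, ∃ i, p a r ∈ Jp i) :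
    (Finset.univ.filter (fun a => ¬ ∃ i, ∀ r, p a r ∈ Jp i)).card ≤ m := by
  choose f hf using fun a => hcov a 0
  have key : ∀ a b, a < b → f a = f b → ∃ i, ∀ r, p a r ∈ Jp i := by
    intro a b hab h
    refine ⟨f a, fun r => ?_⟩
    have h2 := hf b
    rw [← h] at h2
    exact (hc (f a)).out (hf a) h2 ⟨hmin a r, (hlt a b hab r 0).le⟩
  have := Finset.card_le_card_of_injOn (t := (Finset.univ : Finset (Fin m)))
    (s := Finset.univ.filter (fun a => ¬ ∃ i, ∀ r, p a r ∈ Jp i)) f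
    (fun _ _ => Finset.mem_coe.2 (Finset.mem_univ _)) (by
      intro a ha b hb hab
      simp only [Finset.coe_filter, Finset.mem_univ, true_and, Set.mem_ofPred_eq] at ha hb
      rcases lt_trichotomy a b with h | h | h
      · exact absurd (key a b h hab) ha
      · exact h
      · exact absurd (key b a h hab.symm) hb)
  simpa using this

lemma aux_half {J : ℕ} (G : Fin (J + 2) → Fin J → ℝ) (h : ℝ → ℝ) (hmono : Monotone h) (u : ℝ) :
    ∃ l : Fin (J + 2) → ℝ, ¬ ∃ η : Fin J → ℝ,
      ∀ r, (u < h (∑ j, η j * G r j)) ↔ 0 < l r := by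
  have hdep : ¬ LinearIndependent ℝ (fun r => ((G r, (1 : ℝ)) : (Fin J → ℝ) × ℝ)) := by
    intro hl
    have := hl.fintype_card_le_finrank
    simp at this
  obtain ⟨l, hsum, r1, hr1⟩ := Fintype.not_linearIndependent_iff.1 hdep
  have h1 : ∑ r, l r = 0 := by
    have := congrArg Prod.snd hsum
    simpa [Prod.snd_sum] using this
  have h2 : ∀ j, ∑ r, l r * G r j = 0 := by
    intro j
    have := congrFun (congrArg Prod.fst hsum) j
    simpa [Prod.fst_sum] using this
  refine ⟨l, ?_⟩
  rintro ⟨η, hη⟩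
  obtain ⟨rp, -, hrp⟩ := Finset.exists_pos_of_sum_zero_of_exists_nonzero l h1
    ⟨r1, Finset.mem_univ _, hr1⟩
  obtain ⟨rn, -, hrn⟩ := Finset.exists_pos_of_sum_zero_of_exists_nonzero (fun r => - l r)
    (s := Finset.univ) (by simp [h1]) ⟨r1, Finset.mem_univ _, by simpa using hr1⟩
  set z : Fin (J + 2) → ℝ := fun r => ∑ j, η j * G r j with hz
  obtain ⟨r0, hr0, hr0min⟩ := Finset.exists_min_image (Finset.univ.filter (fun r => 0 < l r)) z
    ⟨rp, by simpa using hrp⟩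
  simp only [Finset.mem_filter, Finset.mem_univ, true_and] at hr0 hr0min
  have hlow : ∀ r, l r ≤ 0 → z r < z r0 := by
    intro r hr
    by_contra hcon
    push Not at hcon
    have := (hη r).1 (lt_of_lt_of_le ((hη r0).2 hr0) (hmono hcon))
    linarith
  have hz0 : ∑ r, l r * z r = 0 := by
    simp only [hz, Finset.mul_sum]
    rw [Finset.sum_comm]
    refine Finset.sum_eq_zero fun j _ => ?_
    have : ∑ r, l r * (η j * G r j) = η j * ∑ r, l r * G r j := by
      rw [Finset.mul_sum]; exact Finset.sum_congr rfl fun r _ => by ring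
    rw [this, h2, mul_zero]
  have hs : ∑ r, l r * (z r - z r0) = 0 := by
    simp only [mul_sub, Finset.sum_sub_distrib, ← Finset.sum_mul, hz0, h1]; simp
  have hpos : 0 < ∑ r, l r * (z r - z r0) := by
    refine Finset.sum_pos' (fun r _ => ?_) ⟨rn, Finset.mem_univ _, ?_⟩
    · rcases le_or_gt (l r) 0 with hr | hr
      · exact mul_nonneg_of_nonpos_of_nonpos hr (by linarith [hlow r hr])
      · exact mul_nonneg hr.le (by linarith [hr0min r hr])
    · have : l rn < 0 := by simpa using hrn
      exact mul_pos_of_neg_of_neg this (by linarith [hlow rn this.le])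
  linarith

def hpsi (z : ℝ) : ℝ := (Real.sqrt (Real.exp z) - 1) / (Real.sqrt (Real.exp z) + 1)

lemma hpsi_mono : Monotone hpsi := by
  intro a b hab
  unfold hpsi
  have h1 : Real.sqrt (Real.exp a) ≤ Real.sqrt (Real.exp b) :=
    Real.sqrt_le_sqrt (Real.exp_le_exp.2 hab)
  have h0 := Real.sqrt_nonneg (Real.exp a)
  rw [div_le_div_iff₀ (by linarith) (by linarith)]
  nlinarith

lemma psiR_exp (a b : ℝ) : psiR (Real.exp a) (Real.exp b) = hpsi (b - a) := by
  unfold psiR hpsi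
  rw [if_neg (Real.exp_pos a).ne', Real.exp_sub]

lemma aux_val {m : ℕ} (Jp : Fin m → Set ℝ) (hd : Pairwise (Function.onFun Disjoint Jp))
    (v : Fin m → ℝ) (x : ℝ) (i : Fin m) (hx : x ∈ Jp i) :
    (∑ i, if x ∈ Jp i then v i else 0) = v i := by
  rw [Finset.sum_eq_single i]
  · simp [hx]
  · intro b _ hb
    rw [if_neg]
    intro hxb
    exact Set.disjoint_left.1 (hd hb) hxb hx
  · simp

theorem statement_8
    -- 𝐈 is an interval of ℝ (an order-connected subset, possibly ℝ itself)
    (I : Set ℝ) (hI : I.OrdConnected)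
    (J : ℕ) (hJ : 1 ≤ J) (g : Fin J → I → ℝ)
    (k : ℕ) (hk : 1 ≤ k)
    (S0 : Set (I → ℝ))
    -- every t ∈ S̄₀ is piecewise exponential on a partition of 𝐈 into at most k intervals
    (hform : ∀ t ∈ S0, ∃ m : ℕ, m ≤ k ∧ ∃ Jp : Fin m → Set ℝ,
      (∀ i, Jp i ⊆ I ∧ (Jp i).OrdConnected) ∧
      Pairwise (Function.onFun Disjoint Jp) ∧
      (⋃ i, Jp i) = I ∧
      ∃ θ : Fin m → Fin J → ℝ,
        t = fun x : I => ∑ i, if (x : ℝ) ∈ Jp i then Real.exp (∑ j, θ i j * g j x) else 0) :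
    WeakVCMajorLE
      {f : I → ℝ | ∃ t ∈ S0, ∃ t' ∈ S0, f = fun x => psiR (t x) (t' x)}
      ⌈(9.4 : ℝ) * k * (J + 2)⌉₊ := by
  intro u F hF
  by_contra hcard
  push Not at hcard
  have hN : (2 * k + 1) * (J + 2) ≤ F.card := by
    refine le_trans ?_ hcard.le
    have h1 : (((2 * k + 1) * (J + 2) : ℕ) : ℝ) ≤ (9.4 : ℝ) * k * (J + 2) := by
      push_cast
      have hk' : (1 : ℝ) ≤ k := by exact_mod_cast hk
      have hJ' : (0 : ℝ) ≤ J := by positivity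
      exact mul_le_mul_of_nonneg_right (by linarith) (by linarith)
    exact_mod_cast h1.trans (Nat.le_ceil _)
  let e : Fin ((2 * k + 1) * (J + 2)) ↪o I :=
    (Fin.castLEOrderEmb hN).trans (F.orderEmbOfFin rfl)
  have heF : ∀ a, e a ∈ F := fun a => F.orderEmbOfFin_mem rfl _
  let q : Fin (2 * k + 1) → Fin (J + 2) → I := fun a r => e (finProdFinEquiv (a, r))
  have hqinj : ∀ a r a' r', q a r = q a' r' → a = a' ∧ r = r' := by
    intro a r a' r' h
    have := finProdFinEquiv.injective (e.injective h)
    simpa using this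
  have hlt : ∀ a b, a < b → ∀ r r', (q a r : ℝ) < q b r' := by
    intro a b hab r r'
    refine Subtype.coe_lt_coe.2 (e.lt_iff_lt.2 ?_)
    rw [Fin.lt_def, finProdFinEquiv_apply_val, finProdFinEquiv_apply_val]
    have h1 : (a : ℕ) + 1 ≤ b := hab
    have h2 := Nat.mul_le_mul_left (J + 2) h1
    have h3 := r.2
    simp only
    rw [mul_add] at h2
    omega
  have hmin : ∀ a r, (q a 0 : ℝ) ≤ q a r := by
    intro a r
    refine Subtype.coe_le_coe.2 (e.le_iff_le.2 ?_)
    rw [Fin.le_def, finProdFinEquiv_apply_val, finProdFinEquiv_apply_val]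
    simp
  choose l hl using fun a => aux_half (fun r j => g j (q a r)) hpsi hpsi_mono u
  obtain ⟨c, ⟨f, ⟨t, ht, t', ht', rfl⟩, rfl⟩, hc⟩ :=
    hF (F.filter fun y => ∃ a r, y = q a r ∧ 0 < l a r) (Finset.filter_subset _ _)
  obtain ⟨m, hm, Jp, hJp, hd, hU, θ, rfl⟩ := hform t ht
  obtain ⟨m', hm', Jp', hJp', hd', hU', θ', rfl⟩ := hform t' ht'
  have hb := aux_bad (fun a r => (q a r : ℝ)) hlt hmin Jp (fun i => (hJp i).2) (fun a r => by
    exact Set.mem_iUnion.1 (hU.symm.subset (q a r).2))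
  have hb' := aux_bad (fun a r => (q a r : ℝ)) hlt hmin Jp' (fun i => (hJp' i).2) (fun a r => by
    exact Set.mem_iUnion.1 (hU'.symm.subset (q a r).2))
  obtain ⟨a, ⟨i, hi⟩, ⟨i', hi'⟩⟩ : ∃ a, (∃ i, ∀ r, (q a r : ℝ) ∈ Jp i) ∧
      (∃ i, ∀ r, (q a r : ℝ) ∈ Jp' i) := by
    by_contra hcon
    have hsub : (Finset.univ : Finset (Fin (2 * k + 1))) ⊆
        (Finset.univ.filter (fun a => ¬ ∃ i, ∀ r, (q a r : ℝ) ∈ Jp i)) ∪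
        (Finset.univ.filter (fun a => ¬ ∃ i, ∀ r, (q a r : ℝ) ∈ Jp' i)) := by
      intro a _
      simp only [Finset.mem_union, Finset.mem_filter, Finset.mem_univ, true_and]
      by_contra h
      rw [not_or, not_not, not_not] at h
      exact hcon ⟨a, h⟩
    have h1 := (Finset.card_le_card hsub).trans (Finset.card_union_le _ _)
    rw [Finset.card_univ, Fintype.card_fin] at h1
    have h2 := h1.trans (add_le_add hb hb')
    omega
  refine hl a ⟨fun j => θ' i' j - θ i j, fun r => ?_⟩
  have h1 := hc (q a r) (heF _)
  simp only [Set.mem_ofPred_eq, Finset.mem_filter] at h1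
  rw [aux_val Jp hd (fun i => Real.exp (∑ j, θ i j * g j (q a r))) _ i (hi r),
    aux_val Jp' hd' (fun i => Real.exp (∑ j, θ' i j * g j (q a r))) _ i' (hi' r),
    psiR_exp, ← Finset.sum_sub_distrib] at h1
  simp only [sub_mul]
  rw [h1]
  constructor
  · rintro ⟨-, a', r', h, h'⟩
    obtain ⟨rfl, rfl⟩ := hqinj _ _ _ _ h
    exact h'
  · intro h
    exact ⟨heF _, a, r, rfl, h⟩


end
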